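/- For every d = (d_1,…,d_r) ∈ Z^r there exist a unique element w ∈ W_{Δ_P} and unique integers a_1,…,a_r such that gr(w) + Σ_{i=1}^r a_i·gr(q_{α_i^∨}) = Σ_{i=1}^r d_i e_i in Z^{r+1}. Moreover, if d_i ≥ 0 for all i, then a_i ≥ 0 for all i. -/

import Mathlib

/-!
Write `W_m` for the parabolic subgroup generated by the first `m` simple reflections.  The proof
has two parts.

*Minimal coset representatives in type `A`.*  For `m < r`, the minimal representatives of the
cosets of `W_m` in `W_{m+1}` are exactly the `m + 2` segments `s_k s_{k+1} ⋯ s_m` (indices from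
`0`), so there is exactly one of each length `0, …, m + 1`.  The segments represent every coset
(`exists_seg_mul`), because a segment conjugates simple reflections to simple reflections.
For the lengths one counts inversions: the length of `w` is at least the number of positive roots
it makes negative (`card_invSet_le_len`), and multiplying `v ∈ W_m` on the left by a segment
of length `l` creates at least `l` new inversions (`card_invSet_seg_mul`), since the roots
`v⁻¹ (α_k + ⋯ + α_m)` have coefficient `1` at `α_m` and are therefore positive.  By induction on
`m`, an element of `W_m` without inversions is trivial, and a minimal representative is a segment
(`MinRep.eq_seg`).

*Arithmetic.*  With `a_k = 0` for `k ≥ r`, the equations read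
`ℓ(v_k) + (k + 2) a_k - (k + 1) a_{k+1} = d_k` for `k < r`, and `ℓ(v_r) = 0`.  As `ℓ(v_k)` takes
each of the values `0, …, k + 1` exactly once, descending division with remainder by `k + 2`
determines all `a_k` and `ℓ(v_k)` uniquely, hence also `w`.  If `d_k ≥ 0` and `a_{k+1} ≥ 0`, then
`(k + 2) a_k ≥ -(k + 1)`, so `a_k ≥ 0`.
-/

open scoped BigOperators

/-- A reduced crystallographic root system with a fixed base `α_1, …, α_n` of simple
roots, bundled with its Weyl group `W`.  A root `γ` is recorded by its integer
coordinate vector in the basis of simple roots (so the `i`-th simple root is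
`Pi.single i 1`), and `cor γ` is the coordinate vector of the coroot `γ^∨` in the
basis of simple coroots (hence `cor γ i = ⟨χ_i, γ^∨⟩` for the fundamental weights
`χ_i`).  `A i j = ⟨α_i, α_j^∨⟩` is the Cartan matrix, `σ γ` is the reflection `s_γ`
and `act` is the action of the Weyl group on the root lattice. -/
structure RootSystemData (n : ℕ) where
  A : Fin n → Fin n → ℤ
  R : Finset (Fin n → ℤ)
  cor : (Fin n → ℤ) → (Fin n → ℤ)
  W : Type
  [grp : Group W]
  σ : (Fin n → ℤ) → W
  act : W → (Fin n → ℤ) → (Fin n → ℤ)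
  simple_mem : ∀ i : Fin n, (Pi.single i 1 : Fin n → ℤ) ∈ R
  root_ne_zero : ∀ γ ∈ R, γ ≠ 0
  neg_mem : ∀ γ ∈ R, -γ ∈ R
  pos_or_neg : ∀ γ ∈ R, (∀ i, 0 ≤ γ i) ∨ (∀ i, γ i ≤ 0)
  reduced : ∀ γ ∈ R, ∀ k : ℤ, k • γ ∈ R → k = 1 ∨ k = -1
  cor_simple : ∀ i : Fin n, cor (Pi.single i 1) = Pi.single i 1
  cor_neg : ∀ γ ∈ R, cor (-γ) = -(cor γ)
  pair_self : ∀ γ ∈ R, (∑ i, ∑ j, γ i * A i j * cor γ j) = 2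
  act_one : ∀ x, act 1 x = x
  act_mul : ∀ w w' x, act (w * w') x = act w (act w' x)
  act_refl : ∀ γ ∈ R, ∀ x, act (σ γ) x = x - (∑ i, ∑ j, x i * A i j * cor γ j) • γ
  act_mem : ∀ (w : W), ∀ γ ∈ R, act w γ ∈ R
  cor_refl : ∀ γ ∈ R, ∀ β ∈ R,
    cor (act (σ γ) β) = cor β - (∑ i, ∑ j, γ i * A i j * cor β j) • cor γ
  refl_sq : ∀ γ ∈ R, σ γ * σ γ = 1
  refl_act : ∀ (w : W), ∀ γ ∈ R, σ (act w γ) = w * σ γ * w⁻¹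
  act_faithful : ∀ w w' : W, (∀ γ ∈ R, act w γ = act w' γ) → w = w'
  generated : ∀ w : W, ∃ l : List (Fin n), w = (l.map fun i => σ (Pi.single i 1)).prod

namespace RootSystemData

instance {n : ℕ} (c : RootSystemData n) : Group c.W := c.grp

/-- the pairing `⟨x, λ⟩` between an element `x` of the root lattice (coordinates in
the basis of simple roots) and an element `λ` of the coroot lattice (coordinates in
the basis of simple coroots) -/
def pair {n : ℕ} (c : RootSystemData n) (x lam : Fin n → ℤ) : ℤ :=
  ∑ i, ∑ j, x i * c.A i j * lam j

/-- the `i`-th simple root -/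
def sroot {n : ℕ} (_c : RootSystemData n) (i : Fin n) : Fin n → ℤ := Pi.single i 1

/-- the simple reflection `s_i` -/
def s {n : ℕ} (c : RootSystemData n) (i : Fin n) : c.W := c.σ (c.sroot i)

/-- `s_{α_{t+1}}` for a `0`-based natural number index `t` (`= 1` when out of range) -/
def sN {n : ℕ} (c : RootSystemData n) (t : ℕ) : c.W := if h : t < n then c.s ⟨t, h⟩ else 1

/-- `⟨2ρ, λ⟩ = Σ_{β ∈ R^+} ⟨β, λ⟩`, where `ρ` is the half-sum of the positive roots -/
def pairTwoRho {n : ℕ} (c : RootSystemData n) (lam : Fin n → ℤ) : ℤ :=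
  ∑ β ∈ c.R, if ∀ i, 0 ≤ β i then c.pair β lam else 0

/-- the length of `w ∈ W` with respect to the simple reflections -/
noncomputable def len {n : ℕ} (c : RootSystemData n) (w : c.W) : ℕ :=
  sInf {k | ∃ l : List (Fin n), l.length = k ∧ (l.map c.s).prod = w}

/-- the parabolic subgroup `W_S` generated by the simple reflections indexed by `S` -/
def Wsub {n : ℕ} (c : RootSystemData n) (S : Finset (Fin n)) : Subgroup c.W :=
  Subgroup.closure (c.s '' ↑S)

/-- `w ∈ W_T^S`: `w ∈ W_T` and `w` has minimal length in the coset `w W_S` -/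
def MinRep {n : ℕ} (c : RootSystemData n) (T S : Finset (Fin n)) (w : c.W) : Prop :=
  w ∈ c.Wsub T ∧ ∀ u ∈ c.Wsub S, c.len w ≤ c.len (w * u)

/-- `w` is the longest element of `W_S` -/
def IsLongest {n : ℕ} (c : RootSystemData n) (S : Finset (Fin n)) (w : c.W) : Prop :=
  w ∈ c.Wsub S ∧ ∀ v ∈ c.Wsub S, c.len v ≤ c.len w

end RootSystemData

/-- the support of `γ` is contained in `S`, i.e. `γ` lies in the span of
`{α_i : i ∈ S}` (for a root `γ`, membership in `R_S`) -/
def suppIn {n : ℕ} (S : Finset (Fin n)) (γ : Fin n → ℤ) : Prop :=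
  ∀ i, i ∉ S → γ i = 0

/-- `Δ_j` for `0 ≤ j ≤ r+1`: the index set of the first `j` simple roots for `j ≤ r`,
and all of `Δ` for `j = r+1`.  (Indices of simple roots are `0`-based, so
`α_1, …, α_j` correspond to the indices `0, …, j-1`.) -/
def deltaSet (n r j : ℕ) : Finset (Fin n) :=
  if j = r + 1 then Finset.univ else Finset.univ.filter fun i => (i : ℕ) < j

namespace RootSystemData

/-- `v 0, …, v r` (standing for `v_1, …, v_{r+1}`) is the decomposition of `w`
associated to `(Δ_P, Υ)`:  each `v_i ∈ W_{Δ_i}^{Δ_{i-1}}` and `w = v_{r+1} v_r ⋯ v_1`. -/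
def IsDecomp {n : ℕ} (c : RootSystemData n) (r : ℕ) (w : c.W)
    (v : Fin (r + 1) → c.W) : Prop :=
  (∀ k : Fin (r + 1), c.MinRep (deltaSet n r ((k : ℕ) + 1)) (deltaSet n r (k : ℕ)) (v k)) ∧
    w = (List.ofFn v).reverse.prod

/-- the first `m` simple roots `α_1, …, α_m` form a path of type `A_m`:
`⟨α_i, α_j^∨⟩ = -1` if `|i-j| = 1` and `⟨α_i, α_j^∨⟩ = 0` if `|i-j| ≥ 2`. -/
def PathA {n : ℕ} (c : RootSystemData n) (m : ℕ) : Prop :=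
  ∀ i j : Fin n, (i : ℕ) < m → (j : ℕ) < m →
    (((i : ℕ) + 1 = (j : ℕ) ∨ (j : ℕ) + 1 = (i : ℕ)) → c.A i j = -1) ∧
    ((i : ℕ) + 2 ≤ (j : ℕ) ∨ (j : ℕ) + 2 ≤ (i : ℕ) → c.A i j = 0)

/-- `u_{[k,m]} = s_k s_{k+1} ⋯ s_m` (`1`-based indices; `u_{[k,m]} = 1` for `k > m`) -/
def uu {n : ℕ} (c : RootSystemData n) (k m : ℕ) : c.W :=
  ((List.range' k (m + 1 - k)).map fun t => c.sN (t - 1)).prod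

/-- `u_i^{(m)} = s_{m-i+1} s_{m-i+2} ⋯ s_m` -/
def uElt {n : ℕ} (c : RootSystemData n) (i m : ℕ) : c.W := c.uu (m - i + 1) m

end RootSystemData

/-- strict lexicographic order on `Fin m → ℤ` -/
def lexLT {m : ℕ} (x y : Fin m → ℤ) : Prop :=
  ∃ j, x j < y j ∧ ∀ k, k < j → x k = y k

/-- lexicographic order on `Fin m → ℤ` -/
def lexLE {m : ℕ} (x y : Fin m → ℤ) : Prop := x = y ∨ lexLT x y

/-- the grading `gr(q_{α_{j+1}^∨}) ∈ ℤ^{r+1}` (for the `0`-based index `j < r`), when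
`Δ_P` is of type `A_r`: in `1`-based terms, `gr(q_{α_1^∨}) = 2·e_1` and
`gr(q_{α_j^∨}) = (1-j)·e_{j-1} + (1+j)·e_j` for `2 ≤ j ≤ r`. -/
def grQ (r j : ℕ) : Fin (r + 1) → ℤ := fun k =>
  (if (k : ℕ) = j then (j : ℤ) + 2 else 0) + (if (k : ℕ) + 1 = j then -(j : ℤ) else 0)

/-- the grading `gr(q_λ)` for `λ ∈ Q_P^∨` (coordinates in simple coroots), extended
additively from the `gr(q_{α_j^∨})`, when `Δ_P` is of type `A_r` -/
def grQlam (n r : ℕ) (lam : Fin n → ℤ) : Fin (r + 1) → ℤ :=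
  fun k => ∑ j, lam j * grQ r (j : ℕ) k

namespace RootSystemData

variable {n : ℕ} (c : RootSystemData n)

/-! ### Simple reflections and inversions -/

theorem s_mul_s (j : Fin n) : c.s j * c.s j = 1 := c.refl_sq _ (c.simple_mem j)

theorem s_inv (j : Fin n) : (c.s j)⁻¹ = c.s j := inv_eq_of_mul_eq_one_left (c.s_mul_s j)

theorem act_inv_act (w : c.W) (x : Fin n → ℤ) : c.act w⁻¹ (c.act w x) = x := by
  rw [← c.act_mul, inv_mul_cancel, c.act_one]

theorem act_act_inv (w : c.W) (x : Fin n → ℤ) : c.act w (c.act w⁻¹ x) = x := by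
  rw [← c.act_mul, mul_inv_cancel, c.act_one]

theorem act_s (j : Fin n) (x : Fin n → ℤ) :
    c.act (c.s j) x = x - (∑ i, x i * c.A i j) • c.sroot j := by
  have h := c.act_refl _ (c.simple_mem j) x
  rw [c.cor_simple] at h
  rw [s, sroot, h]
  congr 2
  refine Finset.sum_congr rfl fun i _ => ?_
  simp [Pi.single_apply]

theorem act_s_sroot (i j : Fin n) :
    c.act (c.s j) (c.sroot i) = c.sroot i - c.A i j • c.sroot j := by
  rw [act_s]
  congr 2
  simp [sroot, Pi.single_apply]

theorem A_self (j : Fin n) : c.A j j = 2 := by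
  have h := c.pair_self _ (c.simple_mem j)
  rw [c.cor_simple] at h
  simpa [Pi.single_apply] using h

theorem act_s_add (j : Fin n) (x y : Fin n → ℤ) :
    c.act (c.s j) (x + y) = c.act (c.s j) x + c.act (c.s j) y := by
  simp only [act_s, Pi.add_apply, add_mul, Finset.sum_add_distrib, add_smul]
  abel

/-- A simple reflection changes only one coordinate, so it keeps every positive root other
than its own simple root positive. -/
theorem nonneg_act_s {j : Fin n} {γ : Fin n → ℤ} (hγ : γ ∈ c.R) (hpos : 0 ≤ γ)
    (hne : γ ≠ c.sroot j) : 0 ≤ c.act (c.s j) γ := by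
  have hex : ∃ i, i ≠ j ∧ γ i ≠ 0 := by
    by_contra! h
    have h1 : γ = γ j • c.sroot j := by
      ext i
      by_cases hi : i = j
      · subst hi; simp [sroot]
      · simp [sroot, hi, h i hi]
    have h2 := c.reduced _ (c.simple_mem j) (γ j) (by rw [← sroot, ← h1]; exact hγ)
    rcases h2 with h2 | h2
    · exact hne (by rw [h1, h2, one_smul])
    · have := hpos j
      simp [h2] at this
  obtain ⟨i, hij, hi⟩ := hex
  have hp : 0 < γ i := lt_of_le_of_ne (hpos i) (Ne.symm hi)
  rcases c.pos_or_neg _ (c.act_mem (c.s j) γ hγ) with h | h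
  · exact h
  · have := h i
    rw [act_s] at this
    simp [sroot, hij] at this
    omega

open Classical in
/-- The inversion set of `w`: the positive roots sent to negative roots. -/
noncomputable def invSet (w : c.W) : Finset (Fin n → ℤ) :=
  c.R.filter fun γ => 0 ≤ γ ∧ ¬ 0 ≤ c.act w γ

theorem mem_invSet {w : c.W} {γ : Fin n → ℤ} :
    γ ∈ c.invSet w ↔ γ ∈ c.R ∧ 0 ≤ γ ∧ ¬ 0 ≤ c.act w γ := by
  simp [invSet]

theorem sroot_nonneg (j : Fin n) : 0 ≤ c.sroot j := by
  rw [sroot, Pi.single_nonneg]; exact zero_le_one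

theorem act_s_self (j : Fin n) : c.act (c.s j) (c.sroot j) = -c.sroot j := by
  rw [act_s_sroot, A_self, two_smul]
  abel

theorem not_nonneg_neg_sroot (j : Fin n) : ¬ 0 ≤ -c.sroot j := by
  intro h
  have := h j
  simp [sroot] at this

theorem card_invSet_s_mul_le (j : Fin n) (w : c.W) :
    (c.invSet (c.s j * w)).card ≤ (c.invSet w).card + 1 := by
  classical
  refine (Finset.card_le_card (t := insert (c.act w⁻¹ (c.sroot j)) (c.invSet w)) ?_).trans
    (Finset.card_insert_le _ _)
  intro γ hγ
  rw [mem_invSet, c.act_mul] at hγ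
  obtain ⟨hR, hp, hn⟩ := hγ
  rw [Finset.mem_insert, mem_invSet]
  by_cases h : 0 ≤ c.act w γ
  · left
    by_contra hne
    refine hn (c.nonneg_act_s (c.act_mem w γ hR) h fun heq => hne ?_)
    rw [← heq, act_inv_act]
  · exact Or.inr ⟨hR, hp, h⟩

theorem card_invSet_s_mul (j : Fin n) (w : c.W) (h : 0 ≤ c.act w⁻¹ (c.sroot j)) :
    (c.invSet w).card + 1 ≤ (c.invSet (c.s j * w)).card := by
  classical
  have hnot : c.act w⁻¹ (c.sroot j) ∉ c.invSet w := by
    rw [mem_invSet, act_act_inv]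
    exact fun h => h.2.2 (c.sroot_nonneg j)
  rw [← Finset.card_insert_of_notMem hnot]
  refine Finset.card_le_card fun γ hγ => ?_
  rw [mem_invSet, c.act_mul]
  rcases Finset.mem_insert.1 hγ with rfl | hγ
  · refine ⟨c.act_mem _ _ (c.simple_mem j), h, ?_⟩
    rw [act_act_inv, act_s_self]
    exact c.not_nonneg_neg_sroot j
  · rw [mem_invSet] at hγ
    obtain ⟨hR, hp, hn⟩ := hγ
    refine ⟨hR, hp, fun hsw => ?_⟩
    -- `s_j` is an involution: if `s_j (w γ)` is positive and `w γ` is not, then `s_j (w γ) = α_j`,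
    -- so `γ = -w⁻¹ α_j`, against the positivity of both `γ` and `w⁻¹ α_j`.
    have hback : c.act (c.s j) (c.act (c.s j) (c.act w γ)) = c.act w γ := by
      rw [← c.act_mul, s_mul_s, c.act_one]
    by_cases heq : c.act (c.s j) (c.act w γ) = c.sroot j
    · rw [heq, act_s_self] at hback
      have hσ : c.act (w⁻¹ * c.s j) (c.sroot j) = γ := by
        rw [c.act_mul, act_s_self, hback, act_inv_act]
      have hinv : c.act (w⁻¹ * c.s j) (c.sroot j) = - c.act w⁻¹ (c.sroot j) := by
        -- `w⁻¹ s_j = s_β w⁻¹` with `β = w⁻¹ α_j`, and `s_β β = -β`.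
        have hβ := c.refl_act w⁻¹ _ (c.simple_mem j)
        have hmem : c.act w⁻¹ (c.sroot j) ∈ c.R := c.act_mem w⁻¹ _ (c.simple_mem j)
        have h1 : w⁻¹ * c.s j = c.σ (c.act w⁻¹ (c.sroot j)) * w⁻¹ := by
          rw [sroot, hβ, s, sroot]; group
        rw [h1, c.act_mul, c.act_refl _ hmem]
        rw [c.pair_self _ hmem, two_smul]
        abel
      rw [hσ] at hinv
      have h0 : γ = 0 := le_antisymm (by rw [hinv]; exact neg_nonpos.2 h) hp
      exact c.root_ne_zero γ hR h0
    · have := c.nonneg_act_s (c.act_mem _ _ (c.act_mem w γ hR)) hsw heq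
      rw [hback] at this
      exact hn this

theorem invSet_one : c.invSet 1 = ∅ := by
  ext γ
  simp only [mem_invSet, c.act_one, Finset.notMem_empty, iff_false]
  tauto

theorem card_invSet_prod_le (l : List (Fin n)) :
    (c.invSet (l.map c.s).prod).card ≤ l.length := by
  induction l with
  | nil => simp [invSet_one]
  | cons j l ih =>
    rw [List.map_cons, List.prod_cons, List.length_cons]
    exact (c.card_invSet_s_mul_le j _).trans (by omega)

theorem card_invSet_le_len (w : c.W) : (c.invSet w).card ≤ c.len w := by
  have hne : {k | ∃ l : List (Fin n), l.length = k ∧ (l.map c.s).prod = w}.Nonempty := by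
    obtain ⟨l, hl⟩ := c.generated w
    exact ⟨_, l, rfl, hl.symm⟩
  obtain ⟨l, hl, hw⟩ := Nat.sInf_mem hne
  have := c.card_invSet_prod_le l
  rw [hw, hl] at this
  exact this

theorem len_prod_le (l : List (Fin n)) : c.len (l.map c.s).prod ≤ l.length :=
  Nat.sInf_le ⟨l, rfl, rfl⟩

theorem eq_one_of_len_eq_zero {w : c.W} (h : c.len w = 0) : w = 1 := by
  have hne : {k | ∃ l : List (Fin n), l.length = k ∧ (l.map c.s).prod = w}.Nonempty := by
    obtain ⟨l, hl⟩ := c.generated w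
    exact ⟨_, l, rfl, hl.symm⟩
  obtain ⟨l, hl, hw⟩ := Nat.sInf_mem hne
  have h0 : l = [] := List.length_eq_zero_iff.1 (hl.trans h)
  rw [← hw, h0]; simp

theorem len_one : c.len 1 = 0 := Nat.le_zero.1 (by simpa using c.len_prod_le [])

/-! ### The chain of parabolic subgroups of type `A` -/

/-- `W_{Δ_m}`, generated by the first `m` simple reflections. -/
def WA (m : ℕ) : Subgroup c.W := c.Wsub (Finset.univ.filter fun i => (i : ℕ) < m)

theorem Wsub_deltaSet {r m : ℕ} (h : m ≤ r) : c.Wsub (deltaSet n r m) = c.WA m := by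
  rw [deltaSet, if_neg (by omega), WA]

theorem s_mem_WA {m : ℕ} {j : Fin n} (h : (j : ℕ) < m) : c.s j ∈ c.WA m :=
  Subgroup.subset_closure ⟨j, by simpa using h, rfl⟩

theorem WA_induction {m : ℕ} {p : c.W → Prop} (one : p 1)
    (mul : ∀ j : Fin n, (j : ℕ) < m → ∀ w ∈ c.WA m, p w → p (c.s j * w))
    {w : c.W} (hw : w ∈ c.WA m) : p w := by
  unfold WA Wsub at hw
  induction hw using Subgroup.closure_induction_left with
  | one => exact one
  | mul_left x hx y hy ih =>
    obtain ⟨j, hj, rfl⟩ := hx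
    exact mul j (by simpa using hj) y hy ih
  | inv_mul_cancel x hx y hy ih =>
    obtain ⟨j, hj, rfl⟩ := hx
    rw [s_inv]
    exact mul j (by simpa using hj) y hy ih

theorem act_apply_of_mem_WA {m : ℕ} {w : c.W} (hw : w ∈ c.WA m) (x : Fin n → ℤ) (i : Fin n)
    (hi : m ≤ (i : ℕ)) : c.act w x i = x i := by
  revert x
  refine c.WA_induction (p := fun w => ∀ x, c.act w x i = x i) ?_ ?_ hw
  · intro x; rw [c.act_one]
  · intro j hj w _ ih x
    have : i ≠ j := by rintro rfl; omega
    rw [c.act_mul, act_s]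
    simp [sroot, this, ih]

theorem sN_eq {t : ℕ} (h : t < n) : c.sN t = c.s ⟨t, h⟩ := by simp [sN, h]

/-- The product `s_k s_{k+1} ⋯ s_{k+l-1}` of `l` consecutive simple reflections, with `0`-based
indices. -/
def seg (k : ℕ) : ℕ → c.W
  | 0 => 1
  | l + 1 => seg k l * c.sN (k + l)

theorem seg_succ_left (k l : ℕ) : c.seg k (l + 1) = c.sN k * c.seg (k + 1) l := by
  induction l with
  | zero => simp [seg]
  | succ l ih =>
    rw [seg, ih, seg, mul_assoc]
    congr 3
    omega

theorem seg_eq_prod (k l : ℕ) (h : k + l ≤ n) :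
    ∃ L : List (Fin n), L.length = l ∧ (L.map c.s).prod = c.seg k l := by
  induction l with
  | zero => exact ⟨[], rfl, by simp [seg]⟩
  | succ l ih =>
    obtain ⟨L, h1, h2⟩ := ih (by omega)
    exact ⟨L ++ [⟨k + l, by omega⟩], by simp [h1], by
      simp [h2, seg, c.sN_eq (show k + l < n by omega)]⟩

theorem len_seg_le (k l : ℕ) (h : k + l ≤ n) : c.len (c.seg k l) ≤ l := by
  obtain ⟨L, h1, h2⟩ := c.seg_eq_prod k l h
  rw [← h2]
  exact (c.len_prod_le L).trans h1.le

theorem seg_mem_WA (k l m : ℕ) (h : k + l ≤ m) (hm : m ≤ n) : c.seg k l ∈ c.WA m := by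
  induction l with
  | zero => exact one_mem _
  | succ l ih =>
    refine mul_mem (ih (by omega)) ?_
    rw [c.sN_eq (show k + l < n by omega)]
    exact c.s_mem_WA (show k + l < m by omega)

variable {c} {r : ℕ}

theorem act_s_far (hA : c.PathA r) {i j : Fin n} (hi : (i : ℕ) < r) (hj : (j : ℕ) < r)
    (h : (i : ℕ) + 2 ≤ j ∨ (j : ℕ) + 2 ≤ i) : c.act (c.s j) (c.sroot i) = c.sroot i := by
  rw [act_s_sroot, (hA i j hi hj).2 h, zero_smul, sub_zero]

theorem act_s_near (hA : c.PathA r) {i j : Fin n} (hi : (i : ℕ) < r) (hj : (j : ℕ) < r)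
    (h : (i : ℕ) + 1 = j ∨ (j : ℕ) + 1 = i) :
    c.act (c.s j) (c.sroot i) = c.sroot i + c.sroot j := by
  rw [act_s_sroot, (hA i j hi hj).1 h, neg_one_smul, sub_neg_eq_add]

theorem act_seg_far (hA : c.PathA r) (hrn : r < n) {k l : ℕ} (hkl : k + l ≤ r) {i : Fin n}
    (hi : (i : ℕ) < r) (h : (i : ℕ) + 2 ≤ k ∨ k + l + 1 ≤ i) :
    c.act (c.seg k l) (c.sroot i) = c.sroot i := by
  induction l with
  | zero => rw [seg, c.act_one]
  | succ l ih =>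
    rw [seg, c.act_mul, c.sN_eq (show k + l < n by omega), act_s_far hA hi (by simp; omega)
      (by simp; omega)]
    exact ih (by omega) (by omega)

/-- `s_k ⋯ s_{k+l-1}` shifts the simple roots `α_k, …, α_{k+l-2}` one step up. -/
theorem act_seg_shift (hA : c.PathA r) (hrn : r < n) {k l : ℕ} (hkl : k + l ≤ r) {i i' : Fin n}
    (h1 : k ≤ i) (h2 : (i : ℕ) + 1 < k + l) (hi' : (i' : ℕ) = i + 1) :
    c.act (c.seg k l) (c.sroot i) = c.sroot i' := by
  induction l with
  | zero => omega
  | succ l ih =>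
    rw [seg, c.act_mul, c.sN_eq (show k + l < n by omega)]
    by_cases h : (i : ℕ) + 1 < k + l
    · rw [act_s_far hA (by omega) (by simp; omega) (by simp; omega)]
      exact ih (by omega) h
    · have hil : (⟨k + l, by omega⟩ : Fin n) = i' := Fin.ext (by simp; omega)
      rw [hil, act_s_near hA (by omega) (by omega) (by omega)]
      obtain ⟨l, rfl⟩ : ∃ l', l = l' + 1 := ⟨l - 1, by omega⟩
      have hil2 : (⟨k + l, by omega⟩ : Fin n) = i := Fin.ext (by simp; omega)
      rw [seg, c.act_mul, c.sN_eq (show k + l < n by omega), hil2, act_s_add, act_s_self,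
        act_s_near hA (i := i') (j := i) (by omega) (by omega) (by omega)]
      rw [show -c.sroot i + (c.sroot i' + c.sroot i) = c.sroot i' by abel]
      exact act_seg_far hA hrn (by omega) (by omega) (by omega)

theorem s_mul_seg {k l : ℕ} {i i' : Fin n}
    (h : c.act (c.seg k l) (c.sroot i) = c.sroot i') :
    c.s i' * c.seg k l = c.seg k l * c.s i := by
  have h1 := c.refl_act (c.seg k l) _ (c.simple_mem i)
  rw [← sroot, h, ← s, ← s] at h1
  rw [h1]; group

/-- Every coset of `W_{Δ_m}` in `W_{Δ_{m+1}}` contains one of the `m + 2` segments ending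
in `s_m`. -/
theorem exists_seg_mul (hA : c.PathA r) (hrn : r < n) {m : ℕ} (hm : m < r) {w : c.W}
    (hw : w ∈ c.WA (m + 1)) :
    ∃ k l, k + l = m + 1 ∧ ∃ v ∈ c.WA m, w = c.seg k l * v := by
  refine c.WA_induction (p := fun w => ∃ k l, k + l = m + 1 ∧ ∃ v ∈ c.WA m, w = c.seg k l * v)
    ?_ ?_ hw
  · exact ⟨m + 1, 0, rfl, 1, one_mem _, by simp [seg]⟩
  · rintro j hj _ _ ⟨k, l, hkl, v, hv, rfl⟩
    rcases lt_trichotomy ((j : ℕ) + 1) k with h | h | h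
    · refine ⟨k, l, hkl, c.s j * v, mul_mem (c.s_mem_WA (by omega)) hv, ?_⟩
      rw [← mul_assoc, s_mul_seg (act_seg_far hA hrn (by omega) (by omega) (by omega)), mul_assoc]
    · refine ⟨j, l + 1, by omega, v, hv, ?_⟩
      rw [seg_succ_left, h, c.sN_eq j.2, mul_assoc]
    · by_cases hk : (j : ℕ) = k
      · obtain ⟨l, rfl⟩ : ∃ l', l = l' + 1 := ⟨l - 1, by omega⟩
        refine ⟨k + 1, l, by omega, v, hv, ?_⟩
        rw [seg_succ_left, ← hk, c.sN_eq j.2, ← mul_assoc, ← mul_assoc, s_mul_s, one_mul]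
      · have hi : (j : ℕ) - 1 < n := by omega
        refine ⟨k, l, hkl, c.s ⟨j - 1, hi⟩ * v, mul_mem (c.s_mem_WA (by simp; omega)) hv, ?_⟩
        rw [← mul_assoc, ← mul_assoc, s_mul_seg (act_seg_shift hA hrn (i := ⟨j - 1, hi⟩)
          (by omega) (by simp; omega) (by simp; omega) (by simp; omega))]

/-- `(s_{k+1} ⋯ s_{k+l})⁻¹ α_k = α_k + ⋯ + α_{k+l}`. -/
theorem act_seg_inv (hA : c.PathA r) (hrn : r < n) {k l : ℕ} (hkl : k + l < r) :
    c.act (c.seg (k + 1) l)⁻¹ (c.sroot ⟨k, by omega⟩) =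
      fun i : Fin n => if k ≤ (i : ℕ) ∧ (i : ℕ) ≤ k + l then (1 : ℤ) else 0 := by
  induction l with
  | zero =>
    rw [seg, inv_one, c.act_one]
    ext i
    simp only [sroot, Pi.single_apply, Fin.ext_iff]
    congr 1
    simp; omega
  | succ l ih =>
    rw [seg, mul_inv_rev, c.act_mul, ih (by omega), c.sN_eq (show k + 1 + l < n by omega), s_inv,
      act_s]
    -- only `α_{k+l}` pairs nontrivially with the coroot of `α_{k+l+1}`
    have hsum : (∑ i : Fin n, (if k ≤ (i : ℕ) ∧ (i : ℕ) ≤ k + l then (1 : ℤ) else 0) *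
        c.A i ⟨k + 1 + l, by omega⟩) = -1 := by
      rw [Finset.sum_eq_single (⟨k + l, by omega⟩ : Fin n)]
      · rw [if_pos (by simp), one_mul]
        exact (hA _ _ (by simp; omega) (by simp; omega)).1 (by simp; omega)
      · intro i _ hi
        by_cases h : k ≤ (i : ℕ) ∧ (i : ℕ) ≤ k + l
        · have : (i : ℕ) ≠ k + l := fun h' => hi (Fin.ext h')
          rw [(hA i ⟨k + 1 + l, by omega⟩ (by omega) (by simp; omega)).2 (by simp; omega), mul_zero]
        · rw [if_neg h, zero_mul]
      · simp
    rw [hsum]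
    ext i
    simp only [sroot, Pi.sub_apply, Pi.smul_apply, Pi.single_apply, Fin.ext_iff, smul_eq_mul]
    split_ifs <;> omega

theorem card_invSet_seg_mul (hA : c.PathA r) (hrn : r < n) {m k l : ℕ} (hm : m < r)
    (hkl : k + l = m + 1) {v : c.W} (hv : v ∈ c.WA m) :
    (c.invSet v).card + l ≤ (c.invSet (c.seg k l * v)).card := by
  induction l generalizing k with
  | zero => simp [seg]
  | succ l ih =>
    have h1 := ih (k := k + 1) (by omega)
    have hk : k < n := by omega
    rw [seg_succ_left, c.sN_eq hk, mul_assoc]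
    refine le_trans (by omega) (c.card_invSet_s_mul ⟨k, hk⟩ _ ?_)
    -- the root `v⁻¹ (α_k + ⋯ + α_m)` has coefficient `1` at `α_m`, since `v ∈ W_{Δ_m}`
    have hmem := c.act_mem (c.seg (k + 1) l * v)⁻¹ _ (c.simple_mem ⟨k, hk⟩)
    rcases c.pos_or_neg _ hmem with h | h
    · exact h
    · exfalso
      have h2 := h ⟨m, by omega⟩
      rw [← sroot, mul_inv_rev, c.act_mul, act_seg_inv hA hrn (by omega),
        c.act_apply_of_mem_WA (inv_mem hv) _ _ (by simp), if_pos (by simp; omega)] at h2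
      omega

theorem eq_one_of_card_invSet (hA : c.PathA r) (hrn : r < n) {m : ℕ} (hm : m ≤ r) {w : c.W}
    (hw : w ∈ c.WA m) (h : (c.invSet w).card = 0) : w = 1 := by
  induction m generalizing w with
  | zero =>
    refine c.WA_induction (p := fun w => w = 1) rfl ?_ hw
    intro j hj; omega
  | succ m ih =>
    obtain ⟨k, l, hkl, v, hv, rfl⟩ := exists_seg_mul hA hrn hm hw
    have h1 := card_invSet_seg_mul hA hrn hm hkl hv
    obtain rfl : l = 0 := by omega
    rw [ih (by omega) hv (by omega)]
    simp [seg]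

theorem len_seg (hA : c.PathA r) (hrn : r < n) {m k l : ℕ} (hm : m < r) (hkl : k + l = m + 1) :
    c.len (c.seg k l) = l := by
  refine le_antisymm (c.len_seg_le k l (by omega)) ?_
  have h := card_invSet_seg_mul hA hrn hm hkl (one_mem (c.WA m))
  rw [mul_one] at h
  have := c.card_invSet_le_len (c.seg k l)
  omega

theorem minRep_seg (hA : c.PathA r) (hrn : r < n) {m k l : ℕ} (hm : m < r)
    (hkl : k + l = m + 1) : c.MinRep (deltaSet n r (m + 1)) (deltaSet n r m) (c.seg k l) := by
  rw [MinRep, c.Wsub_deltaSet hm, c.Wsub_deltaSet hm.le]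
  refine ⟨c.seg_mem_WA k l _ hkl.le (by omega), fun u hu => ?_⟩
  rw [len_seg hA hrn hm hkl]
  have h := card_invSet_seg_mul hA hrn hm hkl hu
  have := c.card_invSet_le_len (c.seg k l * u)
  omega

/-- A minimal representative of a coset of `W_{Δ_m}` in `W_{Δ_{m+1}}` is determined by its
length, which is at most `m + 1`. -/
theorem MinRep.eq_seg (hA : c.PathA r) (hrn : r < n) {m : ℕ} (hm : m < r) {w : c.W}
    (hw : c.MinRep (deltaSet n r (m + 1)) (deltaSet n r m) w) :
    c.len w ≤ m + 1 ∧ w = c.seg (m + 1 - c.len w) (c.len w) := by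
  rw [MinRep, c.Wsub_deltaSet hm, c.Wsub_deltaSet hm.le] at hw
  obtain ⟨hw, hmin⟩ := hw
  obtain ⟨k, l, hkl, v, hv, rfl⟩ := exists_seg_mul hA hrn hm hw
  have h1 := hmin v⁻¹ (inv_mem hv)
  rw [mul_inv_cancel_right, len_seg hA hrn hm hkl] at h1
  have h2 := card_invSet_seg_mul hA hrn hm hkl hv
  have h3 := c.card_invSet_le_len (c.seg k l * v)
  obtain rfl : v = 1 := eq_one_of_card_invSet hA hrn hm.le hv (by omega)
  rw [mul_one, len_seg hA hrn hm hkl]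
  refine ⟨by omega, ?_⟩
  congr 1
  omega

end RootSystemData

/-! ### The triangular system of congruences -/

/-- Extension of an integer vector of size `r` by zero to all natural indices. -/
def extZ {r : ℕ} (a : Fin r → ℤ) (k : ℕ) : ℤ := if h : k < r then a ⟨k, h⟩ else 0

theorem sum_grQ {r : ℕ} (a : Fin r → ℤ) (k : Fin (r + 1)) :
    ∑ i : Fin r, a i * grQ r (i : ℕ) k =
      ((k : ℕ) + 2) * extZ a k - ((k : ℕ) + 1) * extZ a ((k : ℕ) + 1) := by
  have key : ∀ (t : ℕ) (f : ℤ), (∑ i : Fin r, if t = (i : ℕ) then a i * f else 0) =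
      f * extZ a t := by
    intro t f
    unfold extZ
    split_ifs with h
    · rw [Finset.sum_eq_single (⟨t, h⟩ : Fin r)]
      · simp [mul_comm]
      · intro b _ hb
        exact if_neg fun h' => hb (Fin.ext h'.symm)
      · simp
    · rw [mul_zero]
      refine Finset.sum_eq_zero fun i _ => if_neg ?_
      omega
  rw [← key, sub_eq_add_neg, ← neg_mul, ← key, ← Finset.sum_add_distrib]
  refine Finset.sum_congr rfl fun i _ => ?_
  unfold grQ
  rw [mul_add]
  congr 1
  · split_ifs with h
    · rw [h]
    · simp
  · split_ifs with h
    · rw [← h]; push_cast; ring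
    · simp

/-- The solution `a_k` of the system, by division with remainder from the last equation down. -/
def solA (r : ℕ) (d : ℕ → ℤ) (k : ℕ) : ℤ :=
  if k < r then (d k + (k + 1) * solA r d (k + 1)) / (k + 2) else 0
termination_by r - k

theorem sol_unique {r : ℕ} {a a' : ℕ → ℤ} {l l' : ℕ → ℕ} (ha : ∀ k, r ≤ k → a k = a' k)
    (hl : ∀ k < r, l k ≤ k + 1) (hl' : ∀ k < r, l' k ≤ k + 1)
    (h : ∀ k < r, (l k : ℤ) + ((k + 2) * a k - (k + 1) * a (k + 1)) =
      l' k + ((k + 2) * a' k - (k + 1) * a' (k + 1))) (k : ℕ) : a k = a' k := by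
  by_cases hk : k < r
  · have ih := sol_unique ha hl hl' h (k + 1)
    have h1 := h k hk
    have h2 : (l k : ℤ) ≤ k + 1 := by exact_mod_cast hl k hk
    have h3 : (l' k : ℤ) ≤ k + 1 := by exact_mod_cast hl' k hk
    rw [ih] at h1
    rcases lt_trichotomy (a k) (a' k) with h4 | h4 | h4
    · nlinarith
    · exact h4
    · nlinarith
  · exact ha k (by omega)
termination_by r - k

theorem sol_nonneg {r : ℕ} {a d : ℕ → ℤ} {l : ℕ → ℕ} (ha : ∀ k, r ≤ k → a k = 0)
    (hl : ∀ k < r, l k ≤ k + 1) (hd : ∀ k < r, 0 ≤ d k)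
    (h : ∀ k < r, (l k : ℤ) + ((k + 2) * a k - (k + 1) * a (k + 1)) = d k) (k : ℕ) :
    0 ≤ a k := by
  by_cases hk : k < r
  · have ih := sol_nonneg ha hl hd h (k + 1)
    have h1 := h k hk
    have h2 : (l k : ℤ) ≤ k + 1 := by exact_mod_cast hl k hk
    have h3 := hd k hk
    by_contra! h4
    nlinarith [mul_nonneg (show (0 : ℤ) ≤ k + 1 by positivity) ih]
  · exact (ha k (by omega)).ge
termination_by r - k

/-- For every `d ∈ ℤ^r` there is a unique pair of an element `w ∈ W_{Δ_P}` and
integers `a_1, …, a_r` with `gr(w) + Σ_i a_i · gr(q_{α_i^∨}) = Σ_i d_i e_i` in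
`ℤ^{r+1}`; moreover if all `d_i ≥ 0` then all `a_i ≥ 0`. -/
theorem grading_bijective_on_WP {n : ℕ} (c : RootSystemData n)
    (r : ℕ) (hr1 : 1 ≤ r) (hrn : r < n) (hA : c.PathA r)
    (d : Fin r → ℤ) :
    (∃! x : c.W × (Fin r → ℤ),
      x.1 ∈ c.Wsub (deltaSet n r r) ∧
      ∃ v : Fin (r + 1) → c.W, c.IsDecomp r x.1 v ∧
        ∀ k : Fin (r + 1),
          (c.len (v k) : ℤ) + ∑ i : Fin r, x.2 i * grQ r (i : ℕ) k =
            (if h : (k : ℕ) < r then d ⟨(k : ℕ), h⟩ else 0)) ∧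
    ((∀ i, 0 ≤ d i) →
      ∀ x : c.W × (Fin r → ℤ),
        (x.1 ∈ c.Wsub (deltaSet n r r) ∧
          ∃ v : Fin (r + 1) → c.W, c.IsDecomp r x.1 v ∧
            ∀ k : Fin (r + 1),
              (c.len (v k) : ℤ) + ∑ i : Fin r, x.2 i * grQ r (i : ℕ) k =
                (if h : (k : ℕ) < r then d ⟨(k : ℕ), h⟩ else 0)) →
        ∀ i, 0 ≤ x.2 i) := by
  have hbound : ∀ v : Fin (r + 1) → c.W, ∀ w, c.IsDecomp r w v → ∀ k (hk : k < r),
      c.len (v ⟨k, by omega⟩) ≤ k + 1 ∧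
        v ⟨k, by omega⟩ = c.seg (k + 1 - c.len (v ⟨k, by omega⟩)) (c.len (v ⟨k, by omega⟩)) := by
    intro v w hv k hk
    exact (hv.1 ⟨k, by omega⟩).eq_seg hA hrn hk
  have hext : ∀ a : Fin r → ℤ, ∀ k, r ≤ k → extZ a k = 0 := by
    intro a k hk
    rw [extZ, dif_neg (by omega)]
  simp_rw [sum_grQ]
  change (∃! x : c.W × (Fin r → ℤ), x.1 ∈ c.Wsub (deltaSet n r r) ∧
      ∃ v : Fin (r + 1) → c.W, c.IsDecomp r x.1 v ∧ ∀ k : Fin (r + 1),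
        (c.len (v k) : ℤ) + (((k : ℕ) + 2) * extZ x.2 k - ((k : ℕ) + 1) * extZ x.2 ((k : ℕ) + 1)) =
          extZ d k) ∧
    ((∀ i, 0 ≤ d i) → ∀ x : c.W × (Fin r → ℤ), (x.1 ∈ c.Wsub (deltaSet n r r) ∧
      ∃ v : Fin (r + 1) → c.W, c.IsDecomp r x.1 v ∧ ∀ k : Fin (r + 1),
        (c.len (v k) : ℤ) + (((k : ℕ) + 2) * extZ x.2 k - ((k : ℕ) + 1) * extZ x.2 ((k : ℕ) + 1)) =
          extZ d k) → ∀ i, 0 ≤ x.2 i)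
  -- the length function of a decomposition, on natural indices
  let ln : (Fin (r + 1) → c.W) → ℕ → ℕ := fun v k => if h : k < r + 1 then c.len (v ⟨k, h⟩) else 0
  have hln : ∀ v k (h : k < r + 1), ln v k = c.len (v ⟨k, h⟩) := fun v k h => dif_pos h
  refine ⟨existsUnique_of_exists_of_unique ?_ ?_, ?_⟩
  · let a : Fin r → ℤ := fun i => solA r (extZ d) i
    have ha : ∀ k, extZ a k = solA r (extZ d) k := by
      intro k
      by_cases h : k < r
      · simp [extZ, a, h]
      · rw [hext a k (by omega), solA, if_neg h]
    let l : ℕ → ℕ := fun k => ((extZ d k + (k + 1) * extZ a (k + 1)) % (k + 2)).toNat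
    have hl : ∀ k : ℕ, (l k : ℤ) = (extZ d k + (k + 1) * extZ a (k + 1)) % (k + 2) :=
      fun k => Int.toNat_of_nonneg (Int.emod_nonneg _ (by omega))
    have hlt : ∀ k, l k ≤ k + 1 := by
      intro k
      have h1 := hl k
      have h2 := Int.emod_lt_of_pos (extZ d k + (k + 1) * extZ a (k + 1))
        (show (0 : ℤ) < (k : ℤ) + 2 by positivity)
      omega
    let v : Fin (r + 1) → c.W := fun k => if (k : ℕ) < r then c.seg (k + 1 - l k) (l k) else 1
    have hvmem : ∀ k, v k ∈ c.WA r := by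
      intro k
      by_cases hk : (k : ℕ) < r
      · have := hlt k
        simp only [v, if_pos hk]
        exact c.seg_mem_WA _ _ _ (by omega) (by omega)
      · simp only [v, if_neg hk]
        exact one_mem _
    refine ⟨((List.ofFn v).reverse.prod, a), ?_, v, ⟨fun k => ?_, rfl⟩, fun k => ?_⟩
    · rw [c.Wsub_deltaSet le_rfl]
      refine Subgroup.list_prod_mem _ fun x hx => ?_
      rw [List.mem_reverse, List.mem_ofFn'] at hx
      obtain ⟨k, rfl⟩ := hx
      exact hvmem k
    · by_cases hk : (k : ℕ) < r
      · have := hlt k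
        simp only [v, if_pos hk]
        exact RootSystemData.minRep_seg hA hrn hk (by omega)
      · simp only [v, if_neg hk]
        exact ⟨one_mem _, fun u _ => by rw [c.len_one]; exact Nat.zero_le _⟩
    · by_cases hk : (k : ℕ) < r
      · have := hlt k
        have hlen : c.len (v k) = l k := by
          simp only [v, if_pos hk]
          exact RootSystemData.len_seg hA hrn hk (by omega)
        have h1 := ha k
        rw [solA, if_pos hk, ← ha] at h1
        have h2 := Int.emod_add_mul_ediv (extZ d k + (k + 1) * extZ a (k + 1)) ((k : ℕ) + 2)
        rw [hlen, hl, h1]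
        linarith
      · simp only [v, if_neg hk, c.len_one]
        rw [hext _ _ (by omega), hext _ _ (by omega), hext _ _ (by omega)]
        simp
  · rintro ⟨w, a⟩ ⟨w', a'⟩ ⟨-, v, hv, h⟩ ⟨-, v', hv', h'⟩
    dsimp only at hv hv' h h'
    have haa : ∀ k, extZ a k = extZ a' k := by
      refine sol_unique (r := r) (l := ln v) (l' := ln v') ?_ ?_ ?_ ?_
      · intro k hk; rw [hext _ _ hk, hext _ _ hk]
      · intro k hk; rw [hln v k (by omega)]; exact (hbound v w hv k hk).1
      · intro k hk; rw [hln v' k (by omega)]; exact (hbound v' w' hv' k hk).1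
      · intro k hk
        rw [hln v k (by omega), hln v' k (by omega)]
        exact (h ⟨k, by omega⟩).trans (h' ⟨k, by omega⟩).symm
    have hll : ∀ k, c.len (v k) = c.len (v' k) := by
      intro k
      have h1 := (h k).trans (h' k).symm
      rw [haa, haa] at h1
      exact_mod_cast add_right_cancel h1
    have hvv : v = v' := by
      funext k
      by_cases hk : (k : ℕ) < r
      · rw [(hbound v w hv k hk).2, (hbound v' w' hv' k hk).2, hll]
      · -- the last equation reads `ℓ(v_{r+1}) = 0`
        have h0 : c.len (v k) = 0 := by
          have h1 := h k
          rw [hext _ _ (by omega), hext _ _ (by omega), hext _ _ (by omega)] at h1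
          simpa using h1
        rw [c.eq_one_of_len_eq_zero h0, c.eq_one_of_len_eq_zero ((hll k).symm.trans h0)]
    refine Prod.ext ?_ ?_
    · subst hvv
      exact hv.2.trans hv'.2.symm
    · funext i
      simpa [extZ] using haa i
  · rintro hd ⟨w, a⟩ ⟨-, v, hv, h⟩ i
    have := sol_nonneg (r := r) (a := extZ a) (d := extZ d) (l := ln v) (hext a)
      (fun k hk => by rw [hln v k (by omega)]; exact (hbound v w hv k hk).1)
      (fun k hk => by simpa [extZ, hk] using hd ⟨k, hk⟩)
      (fun k hk => by rw [hln v k (by omega)]; exact h ⟨k, by omega⟩) i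
    simpa [extZ] using this
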